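/- Let A, B ⊆ ℝ² be Lebesgue-measurable sets with finite positive measure, let F_{A,B}(r) = (λ₂×λ₂){(x,y) ∈ A×B : |x−y| < r} / (λ₂(A)·λ₂(B)), and define g(s) = ∫₀^{2π} λ₂(A ∩ (B + s(cos θ, sin θ))) dθ. If g is continuous at a point r₀ > 0, then F_{A,B} is differentiable at r₀ with derivative f(r₀) = r₀ · g(r₀) / (λ₂(A)·λ₂(B)). That is, the PDF of the distance between two independent uniform points of A and B is f(r) = (r/(λ₂(A)·λ₂(B))) ∫₀^{2π} λ₂(A ∩ (B + r(cos θ, sin θ))) dθ. -/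

import Mathlib

/-!
The difference of independent uniform points of `A` and `B` has density proportional to the
cross-covariogram `v ↦ λ₂(A ∩ (v + B))`, because the shear `(x, y) ↦ (x - y, y)` preserves the
product measure. Hence the distance CDF is, up to normalisation, the integral of the covariogram
over the ball of radius `r`. In polar coordinates this is `∫₀ʳ s · g s ds`, and the fundamental
theorem of calculus differentiates it.
-/

open MeasureTheory Real Set
open scoped ENNReal

/-- The plane `ℝ²` with the Euclidean norm and 2-dimensional Lebesgue measure. -/
abbrev Plane : Type := EuclideanSpace ℝ (Fin 2)

section CrossCovariogram

open scoped Pointwise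

variable {G : Type*} [AddGroup G] [MeasurableSpace G] {μ : Measure G} {A B S : Set G}

/-- The cross-covariogram of `A` and `B`: the measure of the overlap of `A` with the translate of
`B` by `v`. -/
noncomputable def crossCovariogram (μ : Measure G) (A B : Set G) (v : G) : ℝ≥0∞ :=
  μ (A ∩ (v +ᵥ B))

lemma crossCovariogram_eq_measure_preimage_inter [MeasurableAdd G] [μ.IsAddLeftInvariant] (v : G) :
    crossCovariogram μ A B v = μ ((v + ·) ⁻¹' A ∩ B) := by
  rw [crossCovariogram, ← measure_preimage_add μ v, preimage_inter]
  congr 2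
  ext y
  exact vadd_mem_vadd_set_iff

variable [MeasurableAdd₂ G] [SFinite μ] [μ.IsAddLeftInvariant]

lemma measurable_crossCovariogram (hA : MeasurableSet A) (hB : MeasurableSet B) :
    Measurable (crossCovariogram μ A B) := by
  have hAB : MeasurableSet {p : G × G | p.1 + p.2 ∈ A ∧ p.2 ∈ B} :=
    (measurable_add hA).inter (measurable_snd hB)
  rw [funext crossCovariogram_eq_measure_preimage_inter]
  exact measurable_measure_prodMk_left hAB

variable [MeasurableNeg G] [μ.IsAddRightInvariant]

theorem measure_prod_inter_preimage_sub (hA : MeasurableSet A) (hB : MeasurableSet B)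
    (hS : MeasurableSet S) :
    μ.prod μ (A ×ˢ B ∩ (fun p ↦ p.1 - p.2) ⁻¹' S) = ∫⁻ v in S, crossCovariogram μ A B v ∂μ := by
  have hT : MeasurableSet {p : G × G | p.1 ∈ S ∧ p.1 + p.2 ∈ A ∧ p.2 ∈ B} :=
    (measurable_fst hS).inter ((measurable_add hA).inter (measurable_snd hB))
  have shear : A ×ˢ B ∩ (fun p ↦ p.1 - p.2) ⁻¹' S =
      (fun p ↦ (p.1 - p.2, p.2)) ⁻¹' {p : G × G | p.1 ∈ S ∧ p.1 + p.2 ∈ A ∧ p.2 ∈ B} := by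
    ext p
    simp [and_comm]
  rw [shear, (measurePreserving_sub_prod μ μ).measure_preimage hT.nullMeasurableSet,
    Measure.prod_apply hT, ← lintegral_indicator hS]
  refine lintegral_congr fun v ↦ ?_
  by_cases hv : v ∈ S
  · simp [hv, crossCovariogram_eq_measure_preimage_inter, inter_def]
  · simp [hv]

theorem lintegral_crossCovariogram (hA : MeasurableSet A) (hB : MeasurableSet B) :
    ∫⁻ v, crossCovariogram μ A B v ∂μ = μ A * μ B := by
  simpa using (measure_prod_inter_preimage_sub (μ := μ) hA hB MeasurableSet.univ).symm

lemma integrable_toReal_crossCovariogram (hA : MeasurableSet A) (hB : MeasurableSet B)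
    (hA_fin : μ A ≠ ∞) (hB_fin : μ B ≠ ∞) :
    Integrable (fun v ↦ (crossCovariogram μ A B v).toReal) μ :=
  integrable_toReal_of_lintegral_ne_top (measurable_crossCovariogram hA hB).aemeasurable <| by
    rw [lintegral_crossCovariogram hA hB]
    exact ENNReal.mul_ne_top hA_fin hB_fin

theorem measureReal_prod_inter_preimage_sub (hA : MeasurableSet A) (hB : MeasurableSet B)
    (hS : MeasurableSet S) (hA_fin : μ A ≠ ∞) :
    (μ.prod μ).real (A ×ˢ B ∩ (fun p ↦ p.1 - p.2) ⁻¹' S) =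
      ∫ v in S, (crossCovariogram μ A B v).toReal ∂μ := by
  rw [measureReal_def, measure_prod_inter_preimage_sub hA hB hS,
    integral_toReal (measurable_crossCovariogram hA hB).aemeasurable
      (.of_forall fun v ↦ (measure_mono inter_subset_left).trans_lt hA_fin.lt_top)]

end CrossCovariogram

section PolarCoordinates

/-- The point of the plane with polar coordinates `(s, θ)`. -/
noncomputable def polarPoint (s θ : ℝ) : Plane := !₂[s * cos θ, s * sin θ]

lemma norm_polarPoint (s θ : ℝ) : ‖polarPoint s θ‖ = |s| := by
  rw [← sqrt_sq_eq_abs, EuclideanSpace.norm_eq, Fin.sum_univ_two]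
  congr 1
  simp only [polarPoint, norm_eq_abs, sq_abs, PiLp.toLp_apply, Matrix.cons_val_zero,
    Matrix.cons_val_one]
  linear_combination s ^ 2 * cos_sq_add_sin_sq θ

lemma polarPoint_add_two_pi (s θ : ℝ) : polarPoint s (θ + 2 * π) = polarPoint s θ := by
  simp only [polarPoint, cos_add_two_pi, sin_add_two_pi]

@[fun_prop]
lemma measurable_polarPoint : Measurable (fun p : ℝ × ℝ ↦ polarPoint p.1 p.2) :=
  (MeasurableEquiv.toLp 2 (Fin 2 → ℝ)).measurable.comp <|
    MeasurableEquiv.finTwoArrow.symm.measurable.comp continuous_polarCoord_symm.measurable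

/-- The measure `s ds` on a set `S` of radii, which is the radial part of the area element
`s ds dθ`. -/
noncomputable def radialMeasure (S : Set ℝ) : Measure ℝ :=
  (volume.restrict S).withDensity ENNReal.ofReal

instance (S : Set ℝ) : SFinite (radialMeasure S) :=
  inferInstanceAs (SFinite ((volume.restrict S).withDensity ENNReal.ofReal))

theorem lintegral_plane_eq_lintegral_polarPoint (f : Plane → ℝ≥0∞) :
    ∫⁻ v, f v = ∫⁻ p in Ioi 0 ×ˢ Ioo (-π) π, ENNReal.ofReal p.1 * f (polarPoint p.1 p.2) := by
  have toLp := (PiLp.volume_preserving_toLp (Fin 2)).lintegral_comp_emb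
    (MeasurableEquiv.toLp 2 (Fin 2 → ℝ)).measurableEmbedding f
  have finTwoArrow := (volume_preserving_finTwoArrow ℝ).symm.lintegral_comp_emb
    MeasurableEquiv.finTwoArrow.symm.measurableEmbedding fun w ↦ f (WithLp.toLp 2 w)
  rw [← toLp, ← finTwoArrow, ← lintegral_comp_polarCoord_symm]
  rfl

theorem measurePreserving_polarPoint :
    MeasurePreserving (fun p : ℝ × ℝ ↦ polarPoint p.1 p.2)
      ((radialMeasure (Ioi 0)).prod (volume.restrict (Ioo (-π) π))) volume := by
  refine ⟨measurable_polarPoint, Measure.ext_of_lintegral _ fun f hf ↦ ?_⟩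
  rw [lintegral_map hf measurable_polarPoint, radialMeasure,
    prod_withDensity_left ENNReal.measurable_ofReal, Measure.prod_restrict,
    lintegral_withDensity_eq_lintegral_mul _ (by fun_prop) (by fun_prop),
    lintegral_plane_eq_lintegral_polarPoint]
  rfl

lemma measurePreserving_polarPoint_ball (R : ℝ) :
    MeasurePreserving (fun p : ℝ × ℝ ↦ polarPoint p.1 p.2)
      ((radialMeasure (Ioo 0 R)).prod (volume.restrict (Ioo (-π) π)))
      (volume.restrict (Metric.ball 0 R)) := by
  have preimage_ball : (fun p : ℝ × ℝ ↦ polarPoint p.1 p.2) ⁻¹' Metric.ball 0 R =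
      Ioo (-R) R ×ˢ univ := by
    ext p
    simp [norm_polarPoint, abs_lt]
  have radii : Ioo (-R) R ∩ Ioi 0 = Ioo 0 R := by
    ext s
    grind
  have h := measurePreserving_polarPoint.restrict_preimage
    (measurableSet_ball (x := (0 : Plane)) (ε := R))
  rwa [preimage_ball, ← Measure.prod_restrict, Measure.restrict_univ, radialMeasure,
    restrict_withDensity measurableSet_Ioo, Measure.restrict_restrict measurableSet_Ioo,
    radii] at h

variable {E : Type*} [NormedAddCommGroup E] {f : Plane → E} {R r₀ : ℝ}

lemma integrable_comp_polarPoint (hf : IntegrableOn f (Metric.ball 0 R)) :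
    Integrable (fun p : ℝ × ℝ ↦ f (polarPoint p.1 p.2))
      ((radialMeasure (Ioo 0 R)).prod (volume.restrict (Ioo (-π) π))) :=
  (measurePreserving_polarPoint_ball R).integrable_comp_of_integrable hf

variable [NormedSpace ℝ E]

lemma integrable_radialMeasure_iff {S : Set ℝ} (hS : MeasurableSet S) (hS_nonneg : S ⊆ Ici 0)
    {h : ℝ → E} :
    Integrable h (radialMeasure S) ↔ IntegrableOn (fun s ↦ s • h s) S := by
  rw [radialMeasure, integrable_withDensity_iff_integrable_smul' ENNReal.measurable_ofReal
    (.of_forall fun _ ↦ ENNReal.ofReal_lt_top)]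
  exact integrableOn_congr_fun (fun s hs ↦ by simp only [ENNReal.toReal_ofReal (hS_nonneg hs)]) hS

lemma integral_radialMeasure {S : Set ℝ} (hS : MeasurableSet S) (hS_nonneg : S ⊆ Ici 0)
    (h : ℝ → E) :
    ∫ s, h s ∂radialMeasure S = ∫ s in S, s • h s := by
  rw [radialMeasure, integral_withDensity_eq_integral_toReal_smul ENNReal.measurable_ofReal
    (.of_forall fun _ ↦ ENNReal.ofReal_lt_top)]
  exact setIntegral_congr_fun hS fun s hs ↦ by simp only [ENNReal.toReal_ofReal (hS_nonneg hs)]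

/-- The integral of `f` over the circle of radius `s` about the origin with respect to the angle
(not the arc length). -/
noncomputable def angularIntegral (f : Plane → E) (s : ℝ) : E :=
  ∫ θ in (0 : ℝ)..(2 * π), f (polarPoint s θ)

lemma angularIntegral_eq_integral_Ioo (f : Plane → E) (s : ℝ) :
    angularIntegral f s = ∫ θ in Ioo (-π) π, f (polarPoint s θ) := by
  have periodic : Function.Periodic (fun θ ↦ f (polarPoint s θ)) (2 * π) :=
    fun θ ↦ congrArg f (polarPoint_add_two_pi s θ)
  have shift := periodic.intervalIntegral_add_eq 0 (-π)
  rw [zero_add, show -π + 2 * π = π by ring] at shift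
  rw [angularIntegral, shift, intervalIntegral.integral_of_le (by linarith [pi_pos]),
    integral_Ioc_eq_integral_Ioo]

theorem integrableOn_smul_angularIntegral (hf : IntegrableOn f (Metric.ball 0 R)) :
    IntegrableOn (fun s ↦ s • angularIntegral f s) (Ioo 0 R) := by
  rw [← integrable_radialMeasure_iff measurableSet_Ioo fun _ hs ↦ hs.1.le,
    funext (angularIntegral_eq_integral_Ioo f)]
  exact (integrable_comp_polarPoint hf).integral_prod_left

theorem setIntegral_ball_eq_integral_angularIntegral (hf : IntegrableOn f (Metric.ball 0 R)) :
    ∫ v in Metric.ball 0 R, f v = ∫ s in Ioo 0 R, s • angularIntegral f s := by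
  have polar := measurePreserving_polarPoint_ball R
  calc ∫ v in Metric.ball 0 R, f v
      = ∫ p, f (polarPoint p.1 p.2)
          ∂(radialMeasure (Ioo 0 R)).prod (volume.restrict (Ioo (-π) π)) := by
        rw [IntegrableOn, ← polar.map_eq] at hf
        rw [← polar.map_eq]
        exact integral_map polar.aemeasurable hf.aestronglyMeasurable
    _ = ∫ s, angularIntegral f s ∂radialMeasure (Ioo 0 R) := by
        rw [integral_prod _ (integrable_comp_polarPoint hf)]
        simp only [angularIntegral_eq_integral_Ioo]
    _ = ∫ s in Ioo 0 R, s • angularIntegral f s :=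
        integral_radialMeasure measurableSet_Ioo (fun _ hs ↦ hs.1.le) _

theorem hasDerivAt_setIntegral_ball [CompleteSpace E] (hr₀ : 0 < r₀) (hr₀R : r₀ < R)
    (hf : IntegrableOn f (Metric.ball 0 R)) (hcont : ContinuousAt (angularIntegral f) r₀) :
    HasDerivAt (fun r ↦ ∫ v in Metric.ball 0 r, f v) (r₀ • angularIntegral f r₀) r₀ := by
  have h_int := integrableOn_smul_angularIntegral hf
  have h_nhds : Ioo 0 R ∈ nhds r₀ := Ioo_mem_nhds hr₀ hr₀R
  have ball_eq : (fun r ↦ ∫ v in Metric.ball 0 r, f v) =ᶠ[nhds r₀]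
      fun r ↦ ∫ s in (0 : ℝ)..r, s • angularIntegral f s := by
    filter_upwards [h_nhds] with r hr
    rw [setIntegral_ball_eq_integral_angularIntegral
      (hf.mono_set (Metric.ball_subset_ball hr.2.le)),
      intervalIntegral.integral_of_le hr.1.le, integral_Ioc_eq_integral_Ioo]
  refine (intervalIntegral.integral_hasDerivAt_right ?_ ⟨_, h_nhds, h_int.aestronglyMeasurable⟩
    (continuousAt_id.smul hcont)).congr_of_eventuallyEq ball_eq
  rw [intervalIntegrable_iff_integrableOn_Ioo_of_le hr₀.le]
  exact h_int.mono_set (Ioo_subset_Ioo_right hr₀R.le)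

end PolarCoordinates

/-- **PDF form of the distance-distribution theorem (paper's Theorem 2).**
If `A, B ⊆ ℝ²` are measurable with finite positive Lebesgue measure, `F` is the CDF of the
distance between independent uniform points of `A` and `B`, and
`g s = ∫₀^{2π} λ₂(A ∩ (B + s(cos θ, sin θ))) dθ` is continuous at `r₀ > 0`, then `F` is
differentiable at `r₀` with derivative `r₀ · g r₀ / (λ₂(A)·λ₂(B))`. -/
theorem distance_pdf_polar_form
    (A B : Set Plane) (hAm : MeasurableSet A) (hBm : MeasurableSet B)
    (hA0 : 0 < volume A) (hAfin : volume A < ⊤)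
    (hB0 : 0 < volume B) (hBfin : volume B < ⊤)
    (F : ℝ → ℝ)
    (hF : ∀ r : ℝ, F r =
      (((volume : Measure Plane).prod (volume : Measure Plane))
        {p : Plane × Plane | p.1 ∈ A ∧ p.2 ∈ B ∧ dist p.1 p.2 < r}).toReal /
      ((volume A).toReal * (volume B).toReal))
    (g : ℝ → ℝ)
    (hg : ∀ s : ℝ, g s =
      ∫ θ in (0:ℝ)..(2 * π),
        (volume (A ∩ ((fun x : Plane =>
          x + (show Plane from !₂[s * Real.cos θ, s * Real.sin θ])) '' B))).toReal)
    (r₀ : ℝ) (hr₀ : 0 < r₀) (hcont : ContinuousAt g r₀) :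
    HasDerivAt F (r₀ * g r₀ / ((volume A).toReal * (volume B).toReal)) r₀ := by
  have hF_ball : F = fun r ↦ (∫ v in Metric.ball 0 r, (crossCovariogram volume A B v).toReal) /
      ((volume A).toReal * (volume B).toReal) := by
    funext r
    rw [hF, ← measureReal_prod_inter_preimage_sub hAm hBm measurableSet_ball hAfin.ne,
      measureReal_def]
    congr 3
    ext p
    simp [dist_eq_norm, and_assoc]
  have hg_angular : g = angularIntegral fun v ↦ (crossCovariogram volume A B v).toReal := by
    funext s
    simp only [hg, angularIntegral, crossCovariogram, polarPoint, ← image_vadd, vadd_eq_add,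
      add_comm]
  rw [hF_ball, hg_angular]
  rw [hg_angular] at hcont
  exact (hasDerivAt_setIntegral_ball hr₀ (lt_add_one r₀)
    (integrable_toReal_crossCovariogram hAm hBm hAfin.ne hBfin.ne).integrableOn hcont).div_const _
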